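/- Let A be a unital C*-algebra which is not prime, 𝔄 = ⊗_{n=−∞}^{∞} A the two-sided infinite (minimal) tensor product of copies of A, and α the shift automorphism of 𝔄. Then there exists an α-invariant state ω on 𝔄 which cannot be approximated in the weak*-topology by pure states of 𝔄; in particular the α-invariant pure states are not weak*-dense in the α-invariant states. -/

import Mathlib

open scoped ComplexOrder

/-- A state on a C*-algebra: a positive linear functional of norm one. -/
def IsState {A : Type*} [CStarAlgebra A] (φ : A →L[ℂ] ℂ) : Prop :=
  (∀ x : A, 0 ≤ φ (star x * x)) ∧ ‖φ‖ = 1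

/-- A pure state: an extreme point of the state space. -/
def IsPureState {A : Type*} [CStarAlgebra A] (φ : A →L[ℂ] ℂ) : Prop :=
  IsState φ ∧ ∀ (ψ₁ ψ₂ : A →L[ℂ] ℂ) (t : ℝ), IsState ψ₁ → IsState ψ₂ →
    0 < t → t < 1 → φ = t • ψ₁ + (1 - t) • ψ₂ → ψ₁ = φ ∧ ψ₂ = φ

/-- A prime C*-algebra: any two nonzero closed two-sided ideals have nonzero intersection. -/
def IsPrimeCStar (A : Type*) [CStarAlgebra A] : Prop :=
  ∀ I J : TwoSidedIdeal A, IsClosed (I : Set A) → IsClosed (J : Set A) →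
    I ≠ ⊥ → J ≠ ⊥ → I ⊓ J ≠ ⊥

/-- A model of the two-sided infinite *minimal* tensor product `⊗_{n=-∞}^∞ A` of copies of a
unital C*-algebra `A`, together with the shift automorphism.  It is presented by commuting
unital embeddings `e n : A → T`, `n ∈ ℤ`, with dense combined range; the existence of product
states and the fact that product states separate the positive cone single out the *minimal*
tensor product among all C*-algebras generated by commuting copies of `A`. -/
structure ShiftTensorModel (A : Type*) [CStarAlgebra A] (T : Type*) [CStarAlgebra T] where
  e : ℤ → A →⋆ₐ[ℂ] T
  inj : ∀ n, Function.Injective (e n)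
  commutes : ∀ m n : ℤ, m ≠ n → ∀ x y : A, e m x * e n y = e n y * e m x
  generating : (StarAlgebra.adjoin ℂ (⋃ n : ℤ, Set.range (e n))).topologicalClosure = ⊤
  shift : T ≃⋆ₐ[ℂ] T
  shift_apply : ∀ n x, shift (e n x) = e (n + 1) x
  prodState : ∀ φ : ℤ → (A →L[ℂ] ℂ), (∀ n, IsState (φ n)) →
    ∃ Φ : T →L[ℂ] ℂ, IsState Φ ∧ ∀ (l : List ℤ), l.Nodup → ∀ a : ℤ → A,
      Φ ((l.map fun i => e i (a i)).prod) = (l.map fun i => φ i (a i)).prod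
  minimality : ∀ w : T, (∃ y : T, w = star y * y) → w ≠ 0 →
    ∃ (φ : ℤ → (A →L[ℂ] ℂ)) (Φ : T →L[ℂ] ℂ), (∀ n, IsState (φ n)) ∧ IsState Φ ∧ Φ w ≠ 0 ∧
      ∀ (l : List ℤ), l.Nodup → ∀ a : ℤ → A,
        Φ ((l.map fun i => e i (a i)).prod) = (l.map fun i => φ i (a i)).prod

/-- The Gelfand-Naimark-Segal representation of a state. -/
theorem IsState.exists_gns.{u} {A : Type u} [CStarAlgebra A] {φ : A →L[ℂ] ℂ} (hφ : IsState φ) :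
    ∃ (H : Type u) (_ : NormedAddCommGroup H) (_ : InnerProductSpace ℂ H) (_ : CompleteSpace H)
      (π : A →⋆ₐ[ℂ] (H →L[ℂ] H)) (ξ : H), ‖ξ‖ = 1 ∧ ∀ x, φ x = inner ℂ ξ (π x ξ) := by
  let _ := CStarAlgebra.spectralOrder A
  have := CStarAlgebra.spectralOrderedRing A
  let f : A →ₚ[ℂ] ℂ := PositiveLinearMap.mk₀ φ.toLinearMap fun x hx ↦ by
    obtain ⟨y, rfl⟩ := CStarAlgebra.nonneg_iff_eq_star_mul_self.mp hx
    exact hφ.1 y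
  let ξ : f.GNS := ((f.toPreGNS 1 : f.PreGNS) : f.GNS)
  have hval (x : A) : φ x = inner ℂ ξ (f.gnsStarAlgHom x ξ) := by
    have h : f.gnsStarAlgHom x ξ = ((f.toPreGNS (x * 1) : f.PreGNS) : f.GNS) :=
      f.gnsNonUnitalStarAlgHom_apply_coe
    rw [h, UniformSpace.Completion.inner_coe, PositiveLinearMap.preGNS_inner_def,
      PositiveLinearMap.ofPreGNS_toPreGNS, PositiveLinearMap.ofPreGNS_toPreGNS, star_one,
      one_mul, mul_one]
    rfl
  refine ⟨f.GNS, inferInstance, inferInstance, inferInstance, f.gnsStarAlgHom, ξ, ?_, hval⟩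
  have hone : φ 1 = (‖ξ‖ : ℂ) ^ 2 := by
    rw [hval, map_one, one_apply_eq_self, inner_self_eq_norm_sq_to_K]
    rfl
  have : Nontrivial A := by
    by_contra h
    rw [not_nontrivial_iff_subsingleton] at h
    have : φ = 0 := by ext x; simp [Subsingleton.elim x 0]
    simpa [this] using hφ.2
  have hle : ‖ξ‖ ^ 2 ≤ 1 := by
    simpa [hone, hφ.2] using φ.le_opNorm 1
  have hge : ‖φ‖ ≤ ‖ξ‖ ^ 2 := φ.opNorm_le_bound (by positivity) fun x ↦ by
    rw [hval]
    calc _ ≤ ‖ξ‖ * ‖f.gnsStarAlgHom x ξ‖ := norm_inner_le_norm _ _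
      _ ≤ ‖ξ‖ * (‖x‖ * ‖ξ‖) := by
        gcongr
        exact (ContinuousLinearMap.le_opNorm _ _).trans
          (by gcongr; exact NonUnitalStarAlgHom.norm_apply_le f.gnsStarAlgHom x)
      _ = _ := by ring
  rw [hφ.2] at hge
  nlinarith [norm_nonneg ξ]

theorem IsState.map_one {A : Type*} [CStarAlgebra A] {φ : A →L[ℂ] ℂ} (hφ : IsState φ) :
    φ 1 = 1 := by
  obtain ⟨H, _, _, _, π, ξ, hξ, h⟩ := hφ.exists_gns
  rw [h, _root_.map_one, one_apply_eq_self, inner_self_eq_norm_sq_to_K, hξ]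
  simp

theorem IsState.of_norm_le {A : Type*} [CStarAlgebra A] {φ : A →L[ℂ] ℂ}
    (hpos : ∀ x, 0 ≤ φ (star x * x)) (hone : φ 1 = 1) (hle : ‖φ‖ ≤ 1) : IsState φ := by
  refine ⟨hpos, hle.antisymm ?_⟩
  have : Nontrivial A := by
    by_contra h
    rw [not_nontrivial_iff_subsingleton] at h
    rw [Subsingleton.elim (1 : A) 0] at hone
    simp at hone
  simpa [hone] using φ.le_opNorm 1

theorem IsState.half_add_half {A : Type*} [CStarAlgebra A] {φ ψ : A →L[ℂ] ℂ}
    (hφ : IsState φ) (hψ : IsState ψ) : IsState ((1 / 2 : ℂ) • φ + (1 / 2 : ℂ) • ψ) := by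
  have h2 : (0 : ℂ) ≤ 1 / 2 := by
    rw [Complex.le_def]
    norm_num
  refine .of_norm_le (fun x ↦ ?_) ?_ ?_
  · exact add_nonneg (mul_nonneg h2 (hφ.1 x)) (mul_nonneg h2 (hψ.1 x))
  · simp [hφ.map_one, hψ.map_one]
    norm_num
  · refine (norm_add_le _ _).trans ?_
    rw [norm_smul, norm_smul, hφ.2, hψ.2]
    norm_num

section VectorState

variable {A : Type*} [CStarAlgebra A] {H : Type*} [NormedAddCommGroup H] [InnerProductSpace ℂ H]
  [CompleteSpace H] (π : A →⋆ₐ[ℂ] (H →L[ℂ] H))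

theorem inner_map_star_mul_self (x : A) (η : H) :
    inner ℂ η (π (star x * x) η) = (‖π x η‖ : ℂ) ^ 2 := by
  rw [map_mul, map_star, mul_apply_eq_comp, ContinuousLinearMap.star_eq_adjoint,
    ContinuousLinearMap.adjoint_inner_right, inner_self_eq_norm_sq_to_K]
  rfl

/-- The normalised vector functional `x ↦ ⟪η, π x η⟫ / ‖η‖ ^ 2`. -/
noncomputable def vectorFunctional (η : H) : A →L[ℂ] ℂ :=
  LinearMap.mkContinuous
    { toFun x := ((‖η‖ : ℂ) ^ 2)⁻¹ * inner ℂ η (π x η)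
      map_add' x y := by simp [mul_add]
      map_smul' c x := by simp; ring } 1 fun x ↦ by
    rcases eq_or_ne η 0 with rfl | hη
    · simp
    have hη' : 0 < ‖η‖ := norm_pos_iff.mpr hη
    have h : ‖inner ℂ η (π x η)‖ ≤ ‖η‖ ^ 2 * ‖x‖ :=
      calc _ ≤ ‖η‖ * ‖π x η‖ := norm_inner_le_norm _ _
        _ ≤ ‖η‖ * (‖x‖ * ‖η‖) := by
          gcongr
          exact (ContinuousLinearMap.le_opNorm _ _).trans
            (by gcongr; exact NonUnitalStarAlgHom.norm_apply_le π x)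
        _ = _ := by ring
    simp only [LinearMap.coe_mk, AddHom.coe_mk, norm_mul, norm_inv, norm_pow, Complex.norm_real,
      norm_norm, one_mul]
    rwa [inv_mul_le_iff₀ (by positivity)]

theorem vectorFunctional_apply (η : H) (x : A) :
    vectorFunctional π η x = ((‖η‖ : ℂ) ^ 2)⁻¹ * inner ℂ η (π x η) := rfl

theorem isState_vectorFunctional {η : H} (hη : η ≠ 0) : IsState (vectorFunctional π η) := by
  refine .of_norm_le (fun x ↦ ?_) ?_ (LinearMap.mkContinuous_norm_le _ zero_le_one _)
  · rw [vectorFunctional_apply, inner_map_star_mul_self]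
    norm_cast
    positivity
  · rw [vectorFunctional_apply, map_one, one_apply_eq_self,
      inner_self_eq_norm_sq_to_K]
    exact inv_mul_cancel₀ (by simpa using hη)

end VectorState

/-- The GNS representation of a pure state is prime: if `p A q = 0`, then a pure state vanishes on
`p* p` or on `q q*`. -/
theorem IsPureState.eq_zero_or_eq_zero {A : Type*} [CStarAlgebra A] {φ : A →L[ℂ] ℂ}
    (hφ : IsPureState φ) {p q : A} (hpq : ∀ c, p * c * q = 0) :
    φ (star p * p) = 0 ∨ φ (q * star q) = 0 := by
  obtain ⟨H, _, _, _, π, ξ, hξ, hval⟩ := hφ.1.exists_gns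
  let F : Submodule ℂ H := ⨅ c : A, (π (star q * c)).ker
  have hF (η : H) : η ∈ F ↔ ∀ c, π (star q * c) η = 0 := by simp [F]
  have hclosed : IsClosed (F : Set H) := by
    simp only [F, Submodule.coe_iInf]
    exact isClosed_iInter fun c ↦ (π (star q * c)).isClosed_ker
  have : CompleteSpace F := hclosed.completeSpace_coe
  have hinv (x : A) {η : H} (hη : η ∈ F) : π x η ∈ F := by
    rw [hF] at hη ⊢
    intro c
    simpa [mul_assoc] using hη (c * x)
  have hadj (x : A) (η ζ : H) : inner ℂ (π x η) ζ = inner ℂ η (π (star x) ζ) := by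
    rw [map_star, ContinuousLinearMap.star_eq_adjoint, ContinuousLinearMap.adjoint_inner_right]
  obtain ⟨η, hη, ζ, hζ, hsum⟩ := F.exists_add_mem_mem_orthogonal ξ
  have hqη : π (star q) η = 0 := by simpa using (hF η).1 hη 1
  have hpζ : π p ζ = 0 := by
    rw [← inner_self_eq_zero (𝕜 := ℂ), ← star_star p, ← hadj, star_star]
    refine Submodule.inner_right_of_mem_orthogonal ((hF _).2 fun c ↦ ?_) hζ
    have h : star q * c * star p = 0 := by
      have := congrArg star (hpq (star c))
      simpa [mul_assoc] using this
    rw [← mul_apply_eq_comp, ← map_mul, h, map_zero, zero_apply]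
  have hcross (x : A) : φ x = inner ℂ η (π x η) + inner ℂ ζ (π x ζ) := by
    have h1 : inner ℂ ζ (π x η) = 0 := Submodule.inner_left_of_mem_orthogonal (hinv x hη) hζ
    have h2 : inner ℂ η (π x ζ) = 0 := by
      rw [← star_star x, ← hadj]
      exact Submodule.inner_right_of_mem_orthogonal (hinv _ hη) hζ
    rw [hval, hsum, map_add, inner_add_left, inner_add_right, inner_add_right, h1, h2]
    ring
  have hpφ : φ (star p * p) = inner ℂ η (π (star p * p) η) := by
    rw [hcross, inner_map_star_mul_self π p ζ, hpζ]
    simp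
  have hqφ : φ (q * star q) = inner ℂ ζ (π (q * star q) ζ) := by
    have := inner_map_star_mul_self π (star q) η
    rw [star_star] at this
    rw [hcross, this, hqη]
    simp
  rcases eq_or_ne η 0 with rfl | hη0
  · exact .inl (by simp [hpφ])
  rcases eq_or_ne ζ 0 with rfl | hζ0
  · exact .inr (by simp [hqφ])
  left
  have hnorm : ‖ζ‖ ^ 2 = 1 - ‖η‖ ^ 2 := by
    have := norm_add_sq_eq_norm_sq_add_norm_sq_of_inner_eq_zero η ζ
      (Submodule.inner_right_of_mem_orthogonal hη hζ)
    rw [← hsum, hξ] at this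
    linarith
  have hη1 : (0 : ℝ) < ‖η‖ ^ 2 := by positivity
  have hζ1 : (0 : ℝ) < ‖ζ‖ ^ 2 := by positivity
  have key := (hφ.2 (vectorFunctional π η) (vectorFunctional π ζ) (‖η‖ ^ 2)
    (isState_vectorFunctional π hη0) (isState_vectorFunctional π hζ0) hη1 (by linarith) (by
      ext x
      have h1 : (‖η‖ : ℂ) ≠ 0 := by simpa using hη0
      have h2 : (‖ζ‖ : ℂ) ≠ 0 := by simpa using hζ0
      rw [← hnorm]
      simp only [add_apply, smul_apply,
        vectorFunctional_apply, Complex.real_smul, hcross, Complex.ofReal_pow]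
      field_simp)).2
  rw [← key, vectorFunctional_apply, inner_map_star_mul_self, hpζ]
  simp

namespace ShiftTensorModel

variable {A : Type*} [CStarAlgebra A] {T : Type*} [CStarAlgebra T] (M : ShiftTensorModel A T)

theorem mem_of_isClosed {K : Submodule ℂ T} (hK : IsClosed (K : Set T))
    (h : ∀ t ∈ Submonoid.closure (⋃ n : ℤ, Set.range (M.e n)), t ∈ K) (t : T) : t ∈ K := by
  have hstar : star (⋃ n : ℤ, Set.range (M.e n)) = ⋃ n : ℤ, Set.range (M.e n) := by
    ext t
    simp only [Set.mem_star, Set.mem_iUnion, Set.mem_range]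
    refine exists_congr fun n ↦ ⟨?_, ?_⟩
    · rintro ⟨x, hx⟩
      exact ⟨star x, by rw [map_star, hx, star_star]⟩
    · rintro ⟨x, rfl⟩
      exact ⟨star x, map_star _ _⟩
  have ht : t ∈ (StarAlgebra.adjoin ℂ (⋃ n : ℤ, Set.range (M.e n))).topologicalClosure := by
    rw [M.generating]
    trivial
  refine closure_minimal (fun s hs ↦ ?_) hK ht
  have hs' : s ∈ Subalgebra.toSubmodule (Algebra.adjoin ℂ (⋃ n : ℤ, Set.range (M.e n))) := by
    have : s ∈ (StarAlgebra.adjoin ℂ (⋃ n : ℤ, Set.range (M.e n))).toSubalgebra := hs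
    rwa [StarAlgebra.adjoin_toSubalgebra, hstar, Set.union_self] at this
  rw [Algebra.adjoin_eq_span] at hs'
  exact Submodule.span_le.2 h hs'

theorem e_mul_prod (j : ℤ) (x : A) (a : ℤ → A) (l : List ℤ) (hl : l.Nodup) (hj : j ∈ l) :
    M.e j x * (l.map fun i ↦ M.e i (a i)).prod =
      (l.map fun i ↦ M.e i (Function.update a j (x * a j) i)).prod := by
  induction l with
  | nil => simp at hj
  | cons i l ih =>
    rw [List.nodup_cons] at hl
    simp only [List.map_cons, List.prod_cons]
    by_cases hij : i = j
    · subst hij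
      rw [Function.update_self, map_mul, mul_assoc]
      congr 3
      refine List.map_congr_left fun k hk ↦ ?_
      rw [Function.update_of_ne]
      rintro rfl
      exact hl.1 hk
    · rw [Function.update_of_ne hij, ← mul_assoc, M.commutes j i (Ne.symm hij), mul_assoc,
        ih hl.2 ((List.mem_cons.1 hj).resolve_left (Ne.symm hij))]

theorem exists_eq_prod {t : T} (ht : t ∈ Submonoid.closure (⋃ n : ℤ, Set.range (M.e n))) :
    ∃ (l : List ℤ) (a : ℤ → A), l.Nodup ∧ t = (l.map fun i ↦ M.e i (a i)).prod := by
  induction ht using Submonoid.closure_induction_left with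
  | one => exact ⟨[], 0, by simp⟩
  | mul_left s hs t _ ih =>
    obtain ⟨l, a, hl, rfl⟩ := ih
    obtain ⟨j, x, rfl⟩ := by simpa using hs
    by_cases hj : j ∈ l
    · exact ⟨l, _, hl, M.e_mul_prod j x a l hl hj⟩
    · refine ⟨j :: l, Function.update a j x, List.nodup_cons.2 ⟨hj, hl⟩, ?_⟩
      simp only [List.map_cons, List.prod_cons, Function.update_self]
      congr 2
      refine List.map_congr_left fun k hk ↦ ?_
      rw [Function.update_of_ne]
      rintro rfl
      exact hj hk

/-- The product state with all factors equal is shift-invariant. -/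
theorem exists_invariant_state {φ : A →L[ℂ] ℂ} (hφ : IsState φ) :
    ∃ Φ : T →L[ℂ] ℂ, IsState Φ ∧ (∀ t, Φ (M.shift t) = Φ t) ∧ ∀ x, Φ (M.e 0 x) = φ x := by
  obtain ⟨Φ, hΦ, hprod⟩ := M.prodState (fun _ ↦ φ) fun _ ↦ hφ
  refine ⟨Φ, hΦ, fun t ↦ ?_, fun x ↦ by simpa using hprod [0] (by simp) fun _ ↦ x⟩
  let K : Submodule ℂ T := LinearMap.eqLocus (Φ.toLinearMap ∘ₗ
    (M.shift : T →⋆ₐ[ℂ] T).toAlgHom.toLinearMap) Φ.toLinearMap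
  have hcont : Continuous M.shift := (NonUnitalStarAlgHom.isometry M.shift
    M.shift.injective).continuous
  have hK : IsClosed (K : Set T) := isClosed_eq (Φ.continuous.comp hcont) Φ.continuous
  refine M.mem_of_isClosed hK (fun s hs ↦ ?_) t
  obtain ⟨l, a, hl, rfl⟩ := M.exists_eq_prod hs
  change Φ (M.shift _) = Φ _
  have := hprod (l.map (· + 1)) (hl.map (add_left_injective 1)) fun i ↦ a (i - 1)
  rw [hprod l hl, map_list_prod]
  simpa [Function.comp_def, M.shift_apply] using this

theorem e_mul_mul_e_eq_zero {I : TwoSidedIdeal A} {b : A} (h : ∀ a ∈ I, a * b = 0) {a : A}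
    (ha : a ∈ I) (t : T) : M.e 0 a * t * M.e 0 b = 0 := by
  let K : Submodule ℂ T := ⨅ a : I, LinearMap.ker
    (LinearMap.mulRight ℂ (M.e 0 b) ∘ₗ LinearMap.mulLeft ℂ (M.e 0 (a : A)))
  have hmem (t : T) : t ∈ K ↔ ∀ a ∈ I, M.e 0 a * t * M.e 0 b = 0 := by simp [K]
  have hK : IsClosed (K : Set T) := by
    simp only [K, Submodule.coe_iInf]
    refine isClosed_iInter fun a ↦ ?_
    exact isClosed_eq (f := fun t ↦ M.e 0 (a : A) * t * M.e 0 b) (by fun_prop) continuous_const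
  refine (hmem t).1 (M.mem_of_isClosed hK (fun s hs ↦ ?_) t) a ha
  induction hs using Submonoid.closure_induction_left with
  | one => exact (hmem 1).2 fun a ha ↦ by rw [mul_one, ← map_mul, h a ha, map_zero]
  | mul_left s hs t _ ih =>
    rw [hmem] at ih ⊢
    obtain ⟨j, x, rfl⟩ := by simpa using hs
    intro a ha
    rcases eq_or_ne j 0 with rfl | hj
    · rw [← mul_assoc, ← map_mul]
      exact ih _ (I.mul_mem_right _ _ ha)
    · rw [← mul_assoc, M.commutes 0 j hj.symm, mul_assoc, mul_assoc, ← mul_assoc (M.e 0 a),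
        ih a ha, mul_zero]

theorem exists_state_ne_zero (M : ShiftTensorModel A T) {x : A} (hx : x ≠ 0) :
    ∃ φ : A →L[ℂ] ℂ, IsState φ ∧ φ (star x * x) ≠ 0 := by
  obtain ⟨φ, Φ, hφ, -, hne, hprod⟩ := M.minimality (M.e 0 (star x * x))
    ⟨M.e 0 x, by rw [map_mul, map_star]⟩ (by
      rw [Ne, map_eq_zero_iff _ (M.inj 0)]
      simpa using hx)
  refine ⟨φ 0, hφ 0, ?_⟩
  have := hprod [0] (by simp) fun _ ↦ star x * x
  simp only [List.map_cons, List.map_nil, List.prod_singleton] at this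
  rwa [← this]

end ShiftTensorModel

/-- **Remark 4.3**: if `A` is a unital C*-algebra which is not prime, then for the shift on
the two-sided infinite (minimal) tensor product `⊗_{n=-∞}^∞ A` there is a shift-invariant
state which cannot be weak*-approximated by pure states at all; in particular the invariant
pure states are not weak*-dense in the invariant states. -/
theorem shift_invariant_state_not_approximable_of_not_prime
    {A : Type*} [CStarAlgebra A] (hnotprime : ¬ IsPrimeCStar A)
    {T : Type*} [CStarAlgebra T] (M : ShiftTensorModel A T) :
    (∃ φ : T →L[ℂ] ℂ, IsState φ ∧ (∀ x, φ (M.shift x) = φ x) ∧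
      ⇑φ ∉ closure {f : T → ℂ | ∃ ψ : T →L[ℂ] ℂ, IsPureState ψ ∧ f = ⇑ψ}) ∧
    ¬ ({f : T → ℂ | ∃ φ : T →L[ℂ] ℂ, IsState φ ∧ (∀ x, φ (M.shift x) = φ x) ∧ f = ⇑φ} ⊆
      closure {f : T → ℂ | ∃ φ : T →L[ℂ] ℂ, IsPureState φ ∧ (∀ x, φ (M.shift x) = φ x) ∧
        f = ⇑φ}) := by
  suffices h : ∃ φ : T →L[ℂ] ℂ, IsState φ ∧ (∀ x, φ (M.shift x) = φ x) ∧
      ⇑φ ∉ closure {f : T → ℂ | ∃ ψ : T →L[ℂ] ℂ, IsPureState ψ ∧ f = ⇑ψ} by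
    refine ⟨h, fun hsub ↦ ?_⟩
    obtain ⟨φ, hφ, hinv, hnot⟩ := h
    refine hnot (closure_mono ?_ (hsub ⟨φ, hφ, hinv, rfl⟩))
    rintro _ ⟨ψ, hψ, -, rfl⟩
    exact ⟨ψ, hψ, rfl⟩
  unfold IsPrimeCStar at hnotprime
  push Not at hnotprime
  obtain ⟨I, J, -, -, hI, hJ, hIJ⟩ := hnotprime
  have hex {K : TwoSidedIdeal A} (hK : K ≠ ⊥) : ∃ x ∈ K, x ≠ 0 := by
    by_contra! h
    exact hK (le_bot_iff.1 fun x hx ↦ (TwoSidedIdeal.mem_bot A).2 (h x hx))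
  obtain ⟨a, haI, ha⟩ := hex hI
  obtain ⟨b, hbJ, hb⟩ := hex hJ
  obtain ⟨φ₁, hφ₁, h₁⟩ := M.exists_state_ne_zero ha
  obtain ⟨φ₂, hφ₂, h₂⟩ := M.exists_state_ne_zero (star_ne_zero.2 hb)
  rw [star_star] at h₂
  obtain ⟨Φ, hΦ, hinv, hΦe⟩ := M.exists_invariant_state (hφ₁.half_add_half hφ₂)
  refine ⟨Φ, hΦ, hinv, fun hmem ↦ ?_⟩
  have hzero (t : T) : M.e 0 a * t * M.e 0 b = 0 :=
    M.e_mul_mul_e_eq_zero (fun x hx ↦ by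
      rw [← TwoSidedIdeal.mem_bot A, ← hIJ, TwoSidedIdeal.mem_inf]
      exact ⟨I.mul_mem_right _ _ hx, J.mul_mem_left _ _ hbJ⟩) haI t
  have hclosed : IsClosed {f : T → ℂ |
      f (M.e 0 (star a * a)) * f (M.e 0 (b * star b)) = 0} :=
    isClosed_eq (by fun_prop) continuous_const
  have hΦ0 : Φ (M.e 0 (star a * a)) * Φ (M.e 0 (b * star b)) = 0 := by
    refine closure_minimal ?_ hclosed hmem
    rintro _ ⟨ψ, hψ, rfl⟩
    have := hψ.eq_zero_or_eq_zero hzero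
    simpa only [Set.mem_ofPred_eq, map_mul, map_star, mul_eq_zero] using this
  have hpos {φ ψ : A →L[ℂ] ℂ} (hφ : IsState φ) (hψ : IsState ψ) (x : A)
      (h : φ (star x * x) ≠ 0 ∨ ψ (star x * x) ≠ 0) :
      ((1 / 2 : ℂ) • φ + (1 / 2 : ℂ) • ψ) (star x * x) ≠ 0 := by
    intro h0
    have h0' : φ (star x * x) + ψ (star x * x) = 0 := by
      simp only [add_apply, smul_apply,
        smul_eq_mul] at h0
      linear_combination 2 * h0
    rw [add_eq_zero_iff_of_nonneg (hφ.1 x) (hψ.1 x)] at h0'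
    tauto
  rw [hΦe, hΦe, mul_eq_zero] at hΦ0
  have := hpos hφ₁ hφ₂ (star b) (.inr (by rwa [star_star]))
  rw [star_star] at this
  exact hΦ0.elim (hpos hφ₁ hφ₂ a (.inl h₁)) this
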